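/- Let f : ℝ → ℝ be m-strongly convex with L-Lipschitz derivative (0 < m ≤ L) and unique minimizer θ⋆. Let p ≥ 1, σ ≥ 0, and let 0 < α ≤ 2/(m+L) be a constant step size. Let (θ_t)_{t≥0} be the ℝᵖ-valued stochastic process of synchronous pull-gossip SGD: θ₀ ∈ ℝᵖ is deterministic and, given θ_t, the next iterate is θ_{t+1,i} = (1/2)(θ_{t,i} + θ_{t,jᵢ}) − α ( f′((1/2)(θ_{t,i} + θ_{t,jᵢ})) + ξ_{t,i} ), where at each step the indices j₁, …, j_p are i.i.d. uniform on {1, …, p} and the noises ξ_{t,i} have conditional mean 0 and conditional variance at most σ² given the history, independent of the indices. Then for every t ≥ 0, E[ ‖θ_t − θ⋆𝟙‖² ] ≤ (1 − 2α·mL/(m+L))ᵗ ‖θ₀ − θ⋆𝟙‖² + p α σ² (m+L)/(2mL). -/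

import Mathlib

/-!
One noisy gradient step from the averaged point `x` satisfies
`θ' - θ⋆ = (x - α f'(x) - θ⋆) - α ξ`. By coercivity and `α ≤ 2/(m+L)`, the deterministic part
contracts squares by `ρ = 1 - 2α mL/(m+L)` (`gradient_step_contracts`). By convexity of the square,
averaging with a uniformly random node does not increase the expected total squared error
(`sum_pull_eq`). The cross term has mean zero and the noise contributes at most `p α² σ²`; hence
`E_{t+1} ≤ ρ E_t + p α² σ²`, and the bound is the solution of this recursion, since
`p α² σ² / (1 - ρ) = p α σ² (m+L)/(2mL)`.

The random index assignment takes finitely many values, so expectations involving it are computed by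
splitting over its value and pulling the history-measurable factor out of the conditional
expectation (`integral_random_index_mul`).
-/

open MeasureTheory BigOperators

/-- One exact gradient step of size `α ≤ 2/(m+L)` contracts the squared distance to the minimizer;
here `e` is the displacement of a point from the minimizer and `d` the derivative at that point. In
dimension one,
coercivity is `(d - m e)(L e - d) ≥ 0`. -/
lemma gradient_step_contracts {m L α e d : ℝ} (hm : 0 < m) (hmL : m ≤ L) (hα : 0 < α)
    (hα2 : α ≤ 2 / (m + L)) (h1 : m * e ^ 2 ≤ d * e) (h2 : |d| ≤ L * |e|) :
    (e - α * d) ^ 2 ≤ (1 - 2 * α * (m * L / (m + L))) * e ^ 2 := by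
  have hs : 0 < m + L := by linarith
  have hco : m * L * e ^ 2 + d ^ 2 ≤ (m + L) * (d * e) := by
    rcases lt_trichotomy e 0 with he | he | he
    · rw [abs_of_neg he, abs_le] at h2
      have h3 : d ≤ m * e := by nlinarith
      nlinarith [mul_nonneg (sub_nonneg.2 h3) (sub_nonneg.2 (show L * e ≤ d by linarith))]
    · subst he
      have : d = 0 := by simpa using h2
      simp [this]
    · rw [abs_of_pos he, abs_le] at h2
      have h3 : m * e ≤ d := by nlinarith
      nlinarith [mul_nonneg (sub_nonneg.2 h3) (sub_nonneg.2 h2.2)]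
  have hα3 : α * (m + L) ≤ 2 := (le_div_iff₀ hs).1 hα2
  have key : (m + L) * (e - α * d) ^ 2 ≤ (m + L) * e ^ 2 - 2 * α * (m * L) * e ^ 2 := by
    have a1 := mul_le_mul_of_nonneg_left hco (by positivity : 0 ≤ 2 * α)
    have a2 := mul_nonneg (mul_nonneg hα.le (sub_nonneg.2 hα3)) (sq_nonneg d)
    nlinarith
  have e1 : (1 - 2 * α * (m * L / (m + L))) * e ^ 2
      = ((m + L) * e ^ 2 - 2 * α * (m * L) * e ^ 2) / (m + L) := by
    field_simp
  rw [e1, le_div_iff₀ hs]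
  linarith

lemma contraction_factor_nonneg {m L α : ℝ} (hm : 0 < m) (hmL : m ≤ L)
    (hα2 : α ≤ 2 / (m + L)) : 0 ≤ 1 - 2 * α * (m * L / (m + L)) := by
  have hL : 0 < L := by linarith
  have hs : 0 < m + L := by linarith
  have hα3 : α * (m + L) ≤ 2 := (le_div_iff₀ hs).1 hα2
  have e1 : 1 - 2 * α * (m * L / (m + L))
      = ((m + L) ^ 2 - 2 * (α * (m + L)) * (m * L)) / (m + L) ^ 2 := by
    field_simp
  rw [e1]
  apply div_nonneg _ (by positivity)
  nlinarith [sq_nonneg (m - L), mul_nonneg (sub_nonneg.2 hα3) (by positivity : 0 ≤ m * L)]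

/-- Summed over the nodes, pulling from independent uniform indices preserves the mean of any
function `A` of the node. -/
lemma sum_pull_eq {p : ℕ} (hp : 1 ≤ p) (A : Fin p → ℝ) :
    ∑ j : Fin p → Fin p, ((p : ℝ) ^ p)⁻¹ * ∑ i, A (j i) = ∑ i, A i := by
  rw [← Finset.mul_sum, Finset.sum_comm]
  have h : ∀ i : Fin p, ∑ j : Fin p → Fin p, A (j i) = (p : ℝ) ^ (p - 1) * ∑ k, A k := by
    intro i
    have := Fintype.sum_piFinset_apply A (Finset.univ : Finset (Fin p)) i
    simpa using this
  simp only [h, Finset.sum_const, Finset.card_univ, Fintype.card_fin, nsmul_eq_mul]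
  have hp0 : (p : ℝ) ≠ 0 := by positivity
  have h2 : (p : ℝ) ^ p = p * (p : ℝ) ^ (p - 1) := by
    rw [← pow_succ', Nat.sub_add_cancel hp]
  rw [h2]
  field_simp

section RandomIndex

variable {Ω κ : Type*} {m0 : MeasurableSpace Ω} {μ : Measure Ω}

lemma random_index_mul_eq_sum [Fintype κ] (J : Ω → κ) (h : κ → Ω → ℝ) (Y : Ω → ℝ) (ω : Ω) :
    h (J ω) ω * Y ω = ∑ j, h j ω * Set.indicator {ω | J ω = j} Y ω := by
  classical
  simp [Set.indicator_apply]

lemma integrable_mul_indicator_index [MeasurableSpace κ] [MeasurableSingletonClass κ]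
    {J : Ω → κ} (hJ : Measurable J) {h : κ → Ω → ℝ} {Y : Ω → ℝ}
    (hi : ∀ j, Integrable (fun ω => h j ω * Y ω) μ) (j : κ) :
    Integrable (fun ω => h j ω * Set.indicator {ω | J ω = j} Y ω) μ := by
  have hmeas : MeasurableSet {ω | J ω = j} := hJ (measurableSet_singleton j)
  refine ((hi j).indicator hmeas).congr (Filter.Eventually.of_forall fun ω => ?_)
  by_cases hω : J ω = j <;> simp [hω]

lemma integrable_random_index_mul [Fintype κ] [MeasurableSpace κ] [MeasurableSingletonClass κ]
    {J : Ω → κ} (hJ : Measurable J) {h : κ → Ω → ℝ} {Y : Ω → ℝ}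
    (hi : ∀ j, Integrable (fun ω => h j ω * Y ω) μ) :
    Integrable (fun ω => h (J ω) ω * Y ω) μ := by
  simp only [random_index_mul_eq_sum J h Y]
  exact integrable_finsetSum _ fun j _ => integrable_mul_indicator_index hJ hi j

/-- For a finitely valued random index `J` and `F`-measurable `h j`, the integral of `h J * Y` is
determined by the conditional expectations of `Y` restricted to the events `J = j`. -/
lemma integral_random_index_mul [Fintype κ] [MeasurableSpace κ] [MeasurableSingletonClass κ]
    [IsProbabilityMeasure μ] {F : MeasurableSpace Ω} (hF : F ≤ m0) {J : Ω → κ}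
    (hJ : Measurable[m0] J) {h : κ → Ω → ℝ} {Y : Ω → ℝ} (hh : ∀ j, StronglyMeasurable[F] (h j))
    (hY : Integrable Y μ) (hi : ∀ j, Integrable (fun ω => h j ω * Y ω) μ) :
    ∫ ω, h (J ω) ω * Y ω ∂μ
      = ∑ j, ∫ ω, h j ω * (μ[Set.indicator {ω | J ω = j} Y | F]) ω ∂μ := by
  simp only [random_index_mul_eq_sum J h Y]
  rw [integral_finsetSum _ fun j _ => integrable_mul_indicator_index hJ hi j]
  refine Finset.sum_congr rfl fun j _ => ?_
  have hmeas : MeasurableSet[m0] {ω | J ω = j} := hJ (measurableSet_singleton j)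
  rw [← integral_condExp hF]
  exact integral_congr_ae (condExp_mul_of_stronglyMeasurable_left (hh j)
    (integrable_mul_indicator_index hJ hi j) (hY.indicator hmeas))

end RandomIndex

/-- Geometric convergence of synchronous pull-gossip SGD to the optimum.  The
process `θ_t ∈ ℝᵖ` starts at a deterministic `θ₀` and at each step every node
`i` averages with a uniformly random node `J t ω i` and takes a noisy gradient
step.  Given the history `ℱ t`, the index assignment `J t` is uniform on the
`p^p` possibilities and the noises have conditional mean `0` and conditional
second moment at most `σ²`, independent of the indices (encoded by the
indicator conditional-expectation hypotheses).  Then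
`E[‖θ_t − θ⋆𝟙‖²] ≤ (1 − 2α mL/(m+L))ᵗ ‖θ₀ − θ⋆𝟙‖² + p α σ² (m+L)/(2mL)`. -/
theorem stmt_3 (p : ℕ) (hp : 1 ≤ p)
    (m L α σ : ℝ) (hm : 0 < m) (hmL : m ≤ L)
    (hα : 0 < α) (hα2 : α ≤ 2 / (m + L)) (hσ : 0 ≤ σ)
    (f f' : ℝ → ℝ) (θstar : ℝ)
    (hderiv : ∀ x, HasDerivAt f (f' x) x)
    (hstrong : ∀ x z, m * (x - z) ^ 2 ≤ (f' x - f' z) * (x - z))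
    (hlip : ∀ x z, |f' x - f' z| ≤ L * |x - z|)
    (hmin : ∀ x, f θstar ≤ f x)
    {Ω : Type*} {m0 : MeasurableSpace Ω} (μ : Measure Ω) [IsProbabilityMeasure μ]
    (ℱ : Filtration ℕ m0)
    (J : ℕ → Ω → Fin p → Fin p) (ξ : ℕ → Fin p → Ω → ℝ)
    (θ : ℕ → Ω → Fin p → ℝ) (θ0 : Fin p → ℝ)
    (hθ0 : ∀ ω, θ 0 ω = θ0)
    (hrec : ∀ t ω i, θ (t + 1) ω i =
      (1 / 2) * (θ t ω i + θ t ω (J t ω i)) -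
        α * (f' ((1 / 2) * (θ t ω i + θ t ω (J t ω i))) + ξ t i ω))
    (hθadapt : ∀ t, Measurable[ℱ t] (θ t))
    (hJmeas : ∀ t, Measurable[ℱ (t + 1)] (J t))
    (hξmeas : ∀ t i, Measurable[ℱ (t + 1)] (ξ t i))
    (hξint : ∀ t i, Integrable (ξ t i) μ)
    (hξint2 : ∀ t i, Integrable (fun ω => ξ t i ω ^ 2) μ)
    (huniform : ∀ t (j0 : Fin p → Fin p),
      μ[Set.indicator {ω | J t ω = j0} (fun _ => (1 : ℝ)) | ℱ t]
        =ᵐ[μ] fun _ => ((p : ℝ) ^ p)⁻¹)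
    (hcondmean : ∀ t i (j0 : Fin p → Fin p),
      μ[Set.indicator {ω | J t ω = j0} (ξ t i) | ℱ t] =ᵐ[μ] 0)
    (hcondvar : ∀ t i (j0 : Fin p → Fin p),
      ∀ᵐ ω ∂μ,
        (μ[Set.indicator {ω' | J t ω' = j0} (fun ω' => ξ t i ω' ^ 2) | ℱ t]) ω
          ≤ σ ^ 2 * ((p : ℝ) ^ p)⁻¹) :
    ∀ t, ∫ ω, ∑ i, (θ t ω i - θstar) ^ 2 ∂μ ≤
      (1 - 2 * α * (m * L / (m + L))) ^ t * ∑ i, (θ0 i - θstar) ^ 2 +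
        p * α * σ ^ 2 * (m + L) / (2 * m * L) := by
  classical
  set ρ : ℝ := 1 - 2 * α * (m * L / (m + L)) with hρ
  have hL : 0 < L := by linarith
  have hs : 0 < m + L := by linarith
  have hρ0 : 0 ≤ ρ := contraction_factor_nonneg hm hmL hα2
  have hρ1 : ρ ≤ 1 := by
    have : 0 ≤ 2 * α * (m * L / (m + L)) := by positivity
    linarith
  have hstar : f' θstar = 0 :=
    IsLocalMin.hasDerivAt_eq_zero (Filter.Eventually.of_forall hmin) (hderiv θstar)
  have hf'cont : Continuous f' := by
    have : LipschitzWith L.toNNReal f' := LipschitzWith.of_dist_le_mul fun x z => by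
      rw [Real.dist_eq, Real.dist_eq, Real.coe_toNNReal L hL.le]
      exact hlip x z
    exact this.continuous
  -- `g t i j ω` is the noiseless displacement of node `i` after step `t` if the indices are `j`.
  let g : ℕ → Fin p → (Fin p → Fin p) → Ω → ℝ := fun t i j ω =>
    (1 / 2) * (θ t ω i + θ t ω (j i)) - α * f' ((1 / 2) * (θ t ω i + θ t ω (j i))) - θstar
  let S : ℕ → Ω → ℝ := fun t ω => ∑ i, (θ t ω i - θstar) ^ 2
  have hstep : ∀ t ω i, θ (t + 1) ω i - θstar = g t i (J t ω) ω - α * ξ t i ω := by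
    intro t ω i
    rw [hrec]
    simp only [g]
    ring
  have hg_le : ∀ t i j ω, g t i j ω ^ 2
      ≤ ρ * (((θ t ω i - θstar) ^ 2 + (θ t ω (j i) - θstar) ^ 2) / 2) := by
    intro t i j ω
    set x := (1 / 2) * (θ t ω i + θ t ω (j i)) with hx
    have h1 := hstrong x θstar
    have h2 := hlip x θstar
    rw [hstar, sub_zero] at h1 h2
    have h3 := gradient_step_contracts hm hmL hα hα2 h1 h2
    have h4 : g t i j ω = x - θstar - α * f' x := by simp only [g, ← hx]; ring
    rw [h4]
    refine h3.trans (mul_le_mul_of_nonneg_left ?_ hρ0)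
    rw [hx]
    nlinarith [sq_nonneg (θ t ω i - θ t ω (j i))]
  have hsingle : ∀ t ω i, (θ t ω i - θstar) ^ 2 ≤ S t ω := fun t ω i =>
    Finset.single_le_sum (f := fun i => (θ t ω i - θstar) ^ 2)
      (fun _ _ => sq_nonneg _) (Finset.mem_univ i)
  have hg_le_S : ∀ t i j ω, g t i j ω ^ 2 ≤ S t ω := by
    intro t i j ω
    have h1 := hg_le t i j ω
    have h2 := hsingle t ω i
    have h3 := hsingle t ω (j i)
    have h4 := mul_le_mul_of_nonneg_right hρ1
      (by positivity : 0 ≤ ((θ t ω i - θstar) ^ 2 + (θ t ω (j i) - θstar) ^ 2) / 2)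
    linarith
  have hθF : ∀ t i, Measurable[ℱ t] fun ω => θ t ω i := fun t i =>
    (measurable_pi_apply i).comp (hθadapt t)
  have hθm : ∀ t i, Measurable fun ω => θ t ω i := fun t i => (hθF t i).mono (ℱ.le t) le_rfl
  have hJm : ∀ t, Measurable (J t) := fun t => (hJmeas t).mono (ℱ.le _) le_rfl
  have hgF : ∀ t i j, Measurable[ℱ t] (g t i j) := by
    intro t i j
    have h1 : Measurable[ℱ t] fun ω => (1 / 2) * (θ t ω i + θ t ω (j i)) :=
      ((hθF t i).add (hθF t (j i))).const_mul _
    exact (h1.sub ((hf'cont.measurable.comp h1).const_mul α)).sub_const θstar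
  have hint : ∀ t i, Integrable (fun ω => (θ t ω i - θstar) ^ 2) μ := by
    intro t
    induction t with
    | zero => intro i; simp only [hθ0]; exact integrable_const _
    | succ t ih =>
      intro i
      have hS : Integrable (S t) μ := integrable_finsetSum _ fun i _ => ih i
      refine ((hS.const_mul 2).add ((hξint2 t i).const_mul (2 * α ^ 2))).mono'
        (((hθm (t + 1) i).sub_const θstar).pow_const 2).aestronglyMeasurable
        (Filter.Eventually.of_forall fun ω => ?_)
      rw [Real.norm_of_nonneg (sq_nonneg _), hstep]
      have := hg_le_S t i (J t ω) ω
      simp only [Pi.add_apply]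
      nlinarith [sq_nonneg (g t i (J t ω) ω + α * ξ t i ω)]
  have hSint : ∀ t, Integrable (S t) μ := fun t => integrable_finsetSum _ fun i _ => hint t i
  have hgξ : ∀ t i j, Integrable (fun ω => g t i j ω * ξ t i ω) μ := by
    intro t i j
    refine ((hSint t).add (hξint2 t i)).mono'
      (((hgF t i j).mono (ℱ.le t) le_rfl).aestronglyMeasurable.mul
        (hξint t i).aestronglyMeasurable) (Filter.Eventually.of_forall fun ω => ?_)
    have := hg_le_S t i j ω
    simp only [Pi.add_apply, Real.norm_eq_abs]
    rw [abs_le]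
    constructor <;>
      nlinarith [sq_nonneg (g t i j ω + ξ t i ω), sq_nonneg (g t i j ω - ξ t i ω),
        sq_nonneg (g t i j ω), sq_nonneg (ξ t i ω)]
  have hcross : ∀ t i, ∫ ω, g t i (J t ω) ω * ξ t i ω ∂μ = 0 := by
    intro t i
    rw [integral_random_index_mul (ℱ.le t) (hJm t) (fun j => (hgF t i j).stronglyMeasurable)
      (hξint t i) (hgξ t i)]
    refine Finset.sum_eq_zero fun j _ => ?_
    rw [← integral_zero Ω ℝ (μ := μ)]
    refine integral_congr_ae ?_
    filter_upwards [hcondmean t i j] with ω hω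
    simp [hω]
  have hppos : (0 : ℝ) < (p : ℝ) ^ p := by
    have : (0 : ℝ) < p := by exact_mod_cast hp
    positivity
  have hnoise : ∀ t i, ∫ ω, ξ t i ω ^ 2 ∂μ ≤ σ ^ 2 := by
    intro t i
    have h1 := integral_random_index_mul (μ := μ) (ℱ.le t) (hJm t) (h := fun _ _ => 1)
      (fun _ => stronglyMeasurable_const) (hξint2 t i)
      (fun _ => by simpa using hξint2 t i)
    simp only [one_mul] at h1
    rw [h1]
    calc _ ≤ ∑ _j : Fin p → Fin p, σ ^ 2 * ((p : ℝ) ^ p)⁻¹ := by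
          refine Finset.sum_le_sum fun j _ => ?_
          have := integral_mono_ae (μ := μ) integrable_condExp (integrable_const _)
            (hcondvar t i j)
          simpa using this
      _ = σ ^ 2 := by
          simp only [Finset.sum_const, Finset.card_univ, Fintype.card_fun, Fintype.card_fin,
            nsmul_eq_mul, Nat.cast_pow]
          field_simp
  let P : ℕ → (Fin p → Fin p) → Ω → ℝ := fun t j ω => ∑ i, (θ t ω (j i) - θstar) ^ 2
  have hPint : ∀ t j, Integrable (P t j) μ := fun t j =>
    integrable_finsetSum _ fun i _ => hint t (j i)
  have hPJint : ∀ t, Integrable (fun ω => P t (J t ω) ω) μ := by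
    intro t
    have := integrable_random_index_mul (μ := μ) (hJm t) (h := P t) (Y := fun _ => 1)
      (by simpa using hPint t)
    simpa using this
  have hpull : ∀ t, ∫ ω, P t (J t ω) ω ∂μ = ∫ ω, S t ω ∂μ := by
    intro t
    have h1 := integral_random_index_mul (μ := μ) (ℱ.le t) (hJm t) (h := P t) (Y := fun _ => 1)
      (fun j => (Finset.measurable_sum _ fun i _ =>
        ((hθF t (j i)).sub_const θstar).pow_const 2).stronglyMeasurable)
      (integrable_const _) (by simpa using hPint t)
    simp only [mul_one] at h1
    rw [h1]
    have h2 : ∀ j, ∫ ω, P t j ω * (μ[Set.indicator {ω | J t ω = j} (fun _ => (1 : ℝ)) | ℱ t]) ω ∂μ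
        = ∫ ω, ((p : ℝ) ^ p)⁻¹ * P t j ω ∂μ := by
      intro j
      refine integral_congr_ae ?_
      filter_upwards [huniform t j] with ω hω
      rw [hω, mul_comm]
    rw [Finset.sum_congr rfl fun j _ => h2 j,
      ← integral_finsetSum _ fun j _ => (hPint t j).const_mul _]
    exact integral_congr_ae (Filter.Eventually.of_forall fun ω =>
      sum_pull_eq hp fun i => (θ t ω i - θstar) ^ 2)
  have hrecur : ∀ t, ∫ ω, S (t + 1) ω ∂μ ≤ ρ * ∫ ω, S t ω ∂μ + p * α ^ 2 * σ ^ 2 := by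
    intro t
    have hgξJ : ∀ i, Integrable (fun ω => g t i (J t ω) ω * ξ t i ω) μ := fun i =>
      integrable_random_index_mul (hJm t) (hgξ t i)
    have hN : ∀ i, Integrable
        (fun ω => -(2 * α) * (g t i (J t ω) ω * ξ t i ω) + α ^ 2 * ξ t i ω ^ 2) μ := fun i =>
      ((hgξJ i).const_mul _).add ((hξint2 t i).const_mul _)
    have hM : Integrable (fun ω => ρ / 2 * S t ω + ρ / 2 * P t (J t ω) ω) μ :=
      ((hSint t).const_mul _).add ((hPJint t).const_mul _)
    have hNs : Integrable (fun ω => ∑ i, (-(2 * α) * (g t i (J t ω) ω * ξ t i ω)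
        + α ^ 2 * ξ t i ω ^ 2)) μ := integrable_finsetSum _ fun i _ => hN i
    calc ∫ ω, S (t + 1) ω ∂μ
        ≤ ∫ ω, ((ρ / 2 * S t ω + ρ / 2 * P t (J t ω) ω)
          + ∑ i, (-(2 * α) * (g t i (J t ω) ω * ξ t i ω) + α ^ 2 * ξ t i ω ^ 2)) ∂μ := by
          refine integral_mono (hSint _) (hM.add hNs) fun ω => ?_
          simp only [S, P, Finset.mul_sum]
          rw [← Finset.sum_add_distrib, ← Finset.sum_add_distrib]
          refine Finset.sum_le_sum fun i _ => ?_
          rw [hstep]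
          have := hg_le t i (J t ω) ω
          nlinarith
      _ = (ρ / 2 * ∫ ω, S t ω ∂μ + ρ / 2 * ∫ ω, S t ω ∂μ)
          + ∑ i, (-(2 * α) * 0 + α ^ 2 * ∫ ω, ξ t i ω ^ 2 ∂μ) := by
          rw [integral_add hM hNs, integral_add ((hSint t).const_mul _) ((hPJint t).const_mul _),
            integral_const_mul, integral_const_mul, hpull, integral_finsetSum _ fun i _ => hN i]
          congr 1
          refine Finset.sum_congr rfl fun i _ => ?_
          rw [integral_add ((hgξJ i).const_mul _) ((hξint2 t i).const_mul _),
            integral_const_mul, integral_const_mul, hcross]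
      _ ≤ (ρ / 2 * ∫ ω, S t ω ∂μ + ρ / 2 * ∫ ω, S t ω ∂μ) + ∑ _i : Fin p, α ^ 2 * σ ^ 2 := by
          gcongr with i
          have := mul_le_mul_of_nonneg_left (hnoise t i) (sq_nonneg α)
          linarith
      _ = ρ * ∫ ω, S t ω ∂μ + p * α ^ 2 * σ ^ 2 := by
          simp only [Finset.sum_const, Finset.card_univ, Fintype.card_fin, nsmul_eq_mul]
          ring
  -- The additive constant of the bound is the fixed point of `x ↦ ρ x + p α² σ²`.
  have hfix : ρ * (p * α * σ ^ 2 * (m + L) / (2 * m * L)) + p * α ^ 2 * σ ^ 2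
      = p * α * σ ^ 2 * (m + L) / (2 * m * L) := by
    rw [hρ]
    field_simp
    ring
  intro t
  induction t with
  | zero =>
    simp only [hθ0, integral_const, probReal_univ, one_smul, pow_zero, one_mul]
    have : 0 ≤ p * α * σ ^ 2 * (m + L) / (2 * m * L) := by positivity
    linarith
  | succ t ih =>
    refine (hrecur t).trans ?_
    have := mul_le_mul_of_nonneg_left ih hρ0
    rw [pow_succ]
    calc _ ≤ ρ * (ρ ^ t * ∑ i, (θ0 i - θstar) ^ 2 + p * α * σ ^ 2 * (m + L) / (2 * m * L))
          + p * α ^ 2 * σ ^ 2 := by linarith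
      _ = _ := by linear_combination hfix
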